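/- Let ψ ∈ N(σ), e ∈ E \ dom(ψ), and let ψ_g be any subrealization at which σ selects e (ψ_g ∈ σ_{-1}[e]) with ψ ⊂ ψ_g. Then, conditioned on the event B(e) that e is selected by both σ and π* and on σ visiting ψ_g, the expected revenue of e equals its cost: E[μ(e) | B(e) ∧ ψ_g ⊂ Ψ(σ)] = c(e). -/

import Mathlib

/-!
Common framework for the Stochastic Submodular Cover problem
(Hellerstein–Kletenik–Parthasarathy, "A Tight Bound for Stochastic Submodular Cover").
-/

namespace SSC

open Finset
open scoped Classical

noncomputable section

variable {E O : Type*}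

/-- A subrealization assigns to each item either a state or `none` (unassigned).
A realization corresponds to the case where every item is assigned. -/
abbrev Sub (E O : Type*) := E → Option O

/-- `subext ψ ψ'` means `ψ ⊆ ψ'` as partial assignments of states to items. -/
def subext (ψ ψ' : Sub E O) : Prop := ∀ e o, ψ e = some o → ψ' e = some o

/-- `ssubext ψ ψ'` means `ψ ⊂ ψ'` (strict extension). -/
def ssubext (ψ ψ' : Sub E O) : Prop := subext ψ ψ' ∧ ψ ≠ ψ'

/-- Extend a subrealization `ψ` by assigning state `o` to item `e`. -/
def updateSub [DecidableEq E] (ψ : Sub E O) (e : E) (o : O) : Sub E O :=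
  fun e' => if e' = e then some o else ψ e'

/-- View a (full) realization as a subrealization. -/
def toSub (φ : E → O) : Sub E O := fun e => some (φ e)

variable [Fintype E] [DecidableEq E] [Fintype O] [DecidableEq O]

/-- An instance of the Stochastic Submodular Cover problem: positive item costs `c`,
a probability mass function `p` on realizations with mutually independent item states,
and a utility function `f` on subrealizations which is zero on the empty subrealization,
nonnegative, monotone and submodular (pointwise polymatroid), and equal to the goal
value `Q > 0` on every full realization (coverability). -/
structure Problem (E O : Type*) [Fintype E] [DecidableEq E] [Fintype O] [DecidableEq O] where
  c : E → ℝ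
  c_pos : ∀ e, 0 < c e
  p : (E → O) → ℝ
  p_nonneg : ∀ φ, 0 ≤ p φ
  p_sum : ∑ φ : E → O, p φ = 1
  indep : ∀ φ : E → O, p φ = ∏ e : E, ∑ φ' : E → O, if φ' e = φ e then p φ' else 0
  f : Sub E O → ℝ
  f_nonneg : ∀ ψ, 0 ≤ f ψ
  f_empty : f (fun _ => none) = 0
  f_mono : ∀ ψ ψ' : Sub E O, subext ψ ψ' → f ψ ≤ f ψ'
  f_submod : ∀ (ψ ψ' : Sub E O) (e : E) (o : O), subext ψ ψ' → ψ' e = none →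
      f (updateSub ψ' e o) - f ψ' ≤ f (updateSub ψ e o) - f ψ
  Q : ℝ
  Q_pos : 0 < Q
  f_cover : ∀ φ : E → O, f (toSub φ) = Q

variable (M : Problem E O)

/-- Expectation of a random variable `X` with respect to the random realization `Φ`. -/
def Ex (X : (E → O) → ℝ) : ℝ := ∑ φ : E → O, M.p φ * X φ

/-- Probability of an event `A` of the random realization `Φ`. -/
def Pr (A : (E → O) → Prop) : ℝ := ∑ φ : E → O, if A φ then M.p φ else 0

/-- Conditional expectation `E[X | A]`. -/
def cEx (X : (E → O) → ℝ) (A : (E → O) → Prop) : ℝ :=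
  (∑ φ : E → O, if A φ then M.p φ * X φ else 0) / Pr M A

/-- The random marginal increase in utility `F_ψ(e)` from observing the state of `e`. -/
def Fm (ψ : Sub E O) (e : E) (φ : E → O) : ℝ := M.f (updateSub ψ e (φ e)) - M.f ψ

/-- The unit price `υ(e|ψ) = c(e) / E[F_ψ(e)]`. -/
def price (ψ : Sub E O) (e : E) : ℝ := M.c e / Ex M (Fm M ψ e)

/-- An adaptive covering policy: at every subrealization `ψ` with `f ψ < Q` it selects an
item outside `dom ψ`. -/
def IsPolicy (π : Sub E O → E) : Prop := ∀ ψ : Sub E O, M.f ψ < M.Q → ψ (π ψ) = none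

/-- The `α`-approximate adaptive greedy policy: at every `ψ` with `f ψ < Q` the unit price of
the selected item `σ ψ` is at most `α` times the minimum unit price, i.e.
`υ(σ ψ | ψ) ≤ α · υ(e | ψ)` for every `e ∉ dom ψ`, written multiplicatively so that infinite
unit prices (zero expected marginal utility) are handled correctly. -/
def IsGreedy (α : ℝ) (σ : Sub E O → E) : Prop :=
  IsPolicy M σ ∧
    ∀ ψ : Sub E O, M.f ψ < M.Q → ∀ e : E, ψ e = none →
      M.c (σ ψ) * Ex M (Fm M ψ e) ≤ α * M.c e * Ex M (Fm M ψ (σ ψ))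

/-- One step of executing policy `π` on realization `φ`. -/
def stepPol (π : Sub E O → E) (φ : E → O) (ψ : Sub E O) : Sub E O :=
  if M.f ψ < M.Q then updateSub ψ (π ψ) (φ (π ψ)) else ψ

/-- The subrealization reached after `n` steps of executing `π` on `φ`. -/
def execAux (π : Sub E O → E) (φ : E → O) : ℕ → Sub E O
  | 0 => fun _ => none
  | n + 1 => stepPol M π φ (execAux π φ n)

/-- The cover `Ψ(π)` constructed by executing `π` on realization `φ`. -/
def cover (π : Sub E O → E) (φ : E → O) : Sub E O := execAux M π φ (Fintype.card E)

/-- `ψ` is visited when executing `π` on realization `φ`. -/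
def visits (π : Sub E O → E) (φ : E → O) (ψ : Sub E O) : Prop := ∃ n, execAux M π φ n = ψ

/-- The set `S(π)` of items selected when executing `π` on `φ`. -/
def Ssel (π : Sub E O → E) (φ : E → O) : Finset E :=
  Finset.univ.filter fun e => cover M π φ e ≠ none

/-- The cost `C(π)` incurred when executing `π` on `φ`. -/
def C (π : Sub E O → E) (φ : E → O) : ℝ := ∑ e ∈ Ssel M π φ, M.c e

/-- An adaptive covering policy of minimum expected cost. -/
def IsOptimal (π : Sub E O → E) : Prop :=
  IsPolicy M π ∧ ∀ π' : Sub E O → E, IsPolicy M π' → Ex M (C M π) ≤ Ex M (C M π')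

/-- `N(π)`: the non-leaf nodes of the decision tree of `π` — subrealizations with
`f ψ < Q` that are visited with positive probability. -/
def Nnodes (π : Sub E O → E) : Finset (Sub E O) :=
  Finset.univ.filter fun ψ => M.f ψ < M.Q ∧ 0 < Pr M fun φ => visits M π φ ψ

/-- The event `ψ ↝ i`, for a marker located at utility value `b = f(ρ_i)`:
`ψ` is the last subrealization visited by `σ` (on the given realization) whose
utility is at most `b`. -/
def leadsTo (σ : Sub E O → E) (b : ℝ) (ψ : Sub E O) (φ : E → O) : Prop :=
  visits M σ φ ψ ∧ M.f ψ ≤ b ∧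
    ∀ ψ' : Sub E O, visits M σ φ ψ' → M.f ψ' ≤ b → subext ψ' ψ

/-- The revenue `λ_i = υ_ψ · ε_i` collected by `σ` from the marker located at utility
value `b = f(ρ_i)` with interval length `εi`, where `ψ` is the unique subrealization
with `ψ ↝ i`. -/
def lam (σ : Sub E O → E) (b εi : ℝ) (φ : E → O) : ℝ :=
  ∑ ψ : Sub E O, if leadsTo M σ b ψ φ then price M ψ (σ ψ) * εi else 0

/-- The revenue `μ(e)` collected by the optimal policy `πs` from item `e`
(relative to the greedy policy `σ`, both executed on the same realization). -/
def mu (σ πs : Sub E O → E) (e : E) (φ : E → O) : ℝ :=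
  if e ∈ Ssel M πs φ then
    if e ∈ Ssel M σ φ then
      ∑ ψ : Sub E O,
        if visits M σ φ ψ ∧ M.f ψ < M.Q ∧ σ ψ = e then price M ψ e * Fm M ψ e φ else 0
    else M.c e
  else 0

/-- The total revenue `μ*` collected by the optimal policy. -/
def muStar (σ πs : Sub E O → E) (φ : E → O) : ℝ := ∑ e : E, mu M σ πs e φ

/-- Replay of the internal state of policy `πs` in the second stage of the hybrid policy:
starting from the empty subrealization, repeatedly query `πs`; an item whose state is
already recorded in `ψ'` is not re-selected, its recorded state being used instead. -/
def replayAux (πs : Sub E O → E) (ψ' : Sub E O) : ℕ → Sub E O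
  | 0 => fun _ => none
  | n + 1 =>
    if M.f (replayAux πs ψ' n) < M.Q then
      match ψ' (πs (replayAux πs ψ' n)) with
      | some o => updateSub (replayAux πs ψ' n) (πs (replayAux πs ψ' n)) o
      | none => replayAux πs ψ' n
    else replayAux πs ψ' n

/-- The hybrid policy `π^ψ0`: follow `σ` until `ψ0` is visited, then switch to executing
`πs` from the root of its tree, never re-selecting an item of `dom ψ0` and using the
state recorded in `ψ0` instead. -/
def hybrid (σ πs : Sub E O → E) (ψ0 : Sub E O) : Sub E O → E := fun ψ' =>
  if subext ψ0 ψ' then πs (replayAux M πs ψ' (Fintype.card E)) else σ ψ'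

/-- `δ⁺_ψ0(e)`: the marginal utility obtained by the hybrid policy `π^ψ0` when it selects
`e` during its second stage, and `0` if `e` is not selected in the second stage. -/
def deltaPlus (σ πs : Sub E O → E) (ψ0 : Sub E O) (e : E) (φ : E → O) : ℝ :=
  ∑ ψ' : Sub E O,
    if subext ψ0 ψ' ∧ visits M (hybrid M σ πs ψ0) φ ψ' ∧
        ssubext ψ' (cover M (hybrid M σ πs ψ0) φ) ∧ hybrid M σ πs ψ0 ψ' = e
    then Fm M ψ' e φ else 0


/-!
At the node `ψg` the policy `σ` selects `e = σ ψg`, and by determinism it visits `ψg` exactly on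
the realizations extending `ψg`. This event does not involve the state of `e`, and neither does the
event that another policy selects `e`, since a policy learns the state of `e` only after selecting
it. So conditioning on both leaves the law of `Φ(e)` unchanged, and the conditional expectation of
the revenue `υ · F_ψg(e)` is `(c(e) / E[F_ψg(e)]) · E[F_ψg(e)] = c(e)`. The division is genuine: by
submodularity the marginal gains at `ψg` sum to at least `Q - f(ψg) > 0` on every realization
extending `ψg`, so some item has positive expected gain, and hence so has the greedy choice.
-/

variable {M} {π : Sub E O → E} {φ φ₀ : E → O} {ψ : Sub E O} {e : E} {m n : ℕ}

section Subrealization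

omit [Fintype E] [DecidableEq E] [Fintype O] [DecidableEq O]

theorem subext.refl (ψ : Sub E O) : subext ψ ψ := fun _ _ h => h

theorem subext.trans {ψ₁ ψ₂ ψ₃ : Sub E O} (h : subext ψ₁ ψ₂) (h' : subext ψ₂ ψ₃) :
    subext ψ₁ ψ₃ :=
  fun x o hx => h' x o (h x o hx)

variable [DecidableEq E]

theorem updateSub_self (ψ : Sub E O) (e : E) (o : O) : updateSub ψ e o e = some o := if_pos rfl

theorem updateSub_eq_update (ψ : Sub E O) (e : E) (o : O) :
    updateSub ψ e o = Function.update ψ e (some o) := by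
  funext x
  rw [Function.update_apply, updateSub]

theorem subext_updateSub (he : ψ e = none) (o : O) : subext ψ (updateSub ψ e o) := by
  intro x o' hx
  have hxe : x ≠ e := by
    rintro rfl
    simp [he] at hx
  rwa [updateSub, if_neg hxe]

theorem updateSub_subext_toSub (h : subext ψ (toSub φ)) :
    subext (updateSub ψ e (φ e)) (toSub φ) := by
  intro x o hx
  by_cases hxe : x = e
  · subst hxe
    rwa [updateSub_self] at hx
  · exact h x o (by rwa [updateSub, if_neg hxe] at hx)

theorem subext_toSub_update_iff (he : ψ e = none) (o : O) :
    subext ψ (toSub (Function.update φ e o)) ↔ subext ψ (toSub φ) := by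
  refine forall₂_congr fun x o' => ?_
  by_cases hx : x = e
  · simp [hx, he]
  · simp [toSub, hx]

end Subrealization

section Execution

theorem execAux_succ_of_lt (h : M.f (execAux M π φ n) < M.Q) :
    execAux M π φ (n + 1) =
      updateSub (execAux M π φ n) (π (execAux M π φ n)) (φ (π (execAux M π φ n))) :=
  if_pos h

theorem execAux_succ_of_not_lt (h : ¬ M.f (execAux M π φ n) < M.Q) :
    execAux M π φ (n + 1) = execAux M π φ n :=
  if_neg h

theorem execAux_subext_toSub (M : Problem E O) (π : Sub E O → E) (φ : E → O) (n : ℕ) :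
    subext (execAux M π φ n) (toSub φ) := by
  induction n with
  | zero => simp [subext, execAux]
  | succ n ih =>
    by_cases hf : M.f (execAux M π φ n) < M.Q
    · rw [execAux_succ_of_lt hf]
      exact updateSub_subext_toSub ih
    · rwa [execAux_succ_of_not_lt hf]

theorem visits.subext_toSub (h : visits M π φ ψ) : subext ψ (toSub φ) := by
  obtain ⟨n, rfl⟩ := h
  exact execAux_subext_toSub M π φ n

theorem mem_ssel_iff : e ∈ Ssel M π φ ↔ cover M π φ e ≠ none := by simp [Ssel]

theorem mem_nnodes_iff : ψ ∈ Nnodes M π ↔ M.f ψ < M.Q ∧ 0 < Pr M fun φ => visits M π φ ψ := by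
  simp [Nnodes]

namespace IsPolicy

theorem subext_execAux_succ (hπ : IsPolicy M π) (φ : E → O) (n : ℕ) :
    subext (execAux M π φ n) (execAux M π φ (n + 1)) := by
  by_cases hf : M.f (execAux M π φ n) < M.Q
  · rw [execAux_succ_of_lt hf]
    exact subext_updateSub (hπ _ hf) _
  · rw [execAux_succ_of_not_lt hf]
    exact subext.refl _

theorem subext_execAux (hπ : IsPolicy M π) (φ : E → O) (hmn : m ≤ n) :
    subext (execAux M π φ m) (execAux M π φ n) := by
  induction n, hmn using Nat.le_induction with
  | base => exact subext.refl _
  | succ n _ ih => exact ih.trans (hπ.subext_execAux_succ φ n)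

theorem select_ne_of_lt (hπ : IsPolicy M π) (hmn : m < n) (hn : M.f (execAux M π φ n) < M.Q) :
    π (execAux M π φ m) ≠ π (execAux M π φ n) := by
  intro heq
  have hm : M.f (execAux M π φ m) < M.Q :=
    (M.f_mono _ _ (hπ.subext_execAux φ hmn.le)).trans_lt hn
  have hsome : execAux M π φ n (π (execAux M π φ m)) = some (φ (π (execAux M π φ m))) := by
    apply hπ.subext_execAux φ (Nat.succ_le_of_lt hmn)
    rw [execAux_succ_of_lt hm, updateSub_self]
  rw [heq, hπ _ hn] at hsome
  simp at hsome

theorem injOn_select (hπ : IsPolicy M π) (φ : E → O) :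
    Set.InjOn (fun n => π (execAux M π φ n)) {n | M.f (execAux M π φ n) < M.Q} := by
  intro m hm n hn heq
  rcases lt_trichotomy m n with hlt | rfl | hlt
  · exact absurd heq (hπ.select_ne_of_lt hlt hn)
  · rfl
  · exact absurd heq.symm (hπ.select_ne_of_lt hlt hm)

theorem eq_of_visits_of_select_eq (hπ : IsPolicy M π) {ψ ψ' : Sub E O}
    (hv : visits M π φ ψ) (hf : M.f ψ < M.Q) (hv' : visits M π φ ψ') (hf' : M.f ψ' < M.Q)
    (heq : π ψ = π ψ') : ψ = ψ' := by
  obtain ⟨m, rfl⟩ := hv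
  obtain ⟨n, rfl⟩ := hv'
  rw [hπ.injOn_select φ hf hf' heq]

theorem lt_card_of_lt (hπ : IsPolicy M π) (hf : M.f (execAux M π φ n) < M.Q) :
    n < Fintype.card E := by
  have hlt (i : Fin (n + 1)) : M.f (execAux M π φ i) < M.Q :=
    (M.f_mono _ _ (hπ.subext_execAux φ (Nat.le_of_lt_succ i.isLt))).trans_lt hf
  have hinj : Function.Injective fun i : Fin (n + 1) => π (execAux M π φ i) :=
    fun i j hij => Fin.ext (hπ.injOn_select φ (hlt i) (hlt j) hij)
  simpa using Fintype.card_le_of_injective _ hinj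

theorem updateSub_subext_cover (hπ : IsPolicy M π) (hv : visits M π φ ψ) (hf : M.f ψ < M.Q) :
    subext (updateSub ψ (π ψ) (φ (π ψ))) (cover M π φ) := by
  obtain ⟨n, rfl⟩ := hv
  rw [← execAux_succ_of_lt hf]
  exact hπ.subext_execAux φ (hπ.lt_card_of_lt hf)

theorem cover_select (hπ : IsPolicy M π) (hv : visits M π φ ψ) (hf : M.f ψ < M.Q) :
    cover M π φ (π ψ) = some (φ (π ψ)) :=
  hπ.updateSub_subext_cover hv hf _ _ (updateSub_self _ _ _)

theorem select_mem_ssel (hπ : IsPolicy M π) (hv : visits M π φ ψ) (hf : M.f ψ < M.Q) :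
    π ψ ∈ Ssel M π φ := by
  simp [mem_ssel_iff, hπ.cover_select hv hf]

theorem execAux_eq_of_subext_toSub (hπ : IsPolicy M π)
    (h : subext (execAux M π φ₀ n) (toSub φ)) : execAux M π φ n = execAux M π φ₀ n := by
  induction n with
  | zero => rfl
  | succ n ih =>
    have heq : execAux M π φ n = execAux M π φ₀ n :=
      ih ((hπ.subext_execAux_succ φ₀ n).trans h)
    by_cases hf : M.f (execAux M π φ₀ n) < M.Q
    · have hstate : φ (π (execAux M π φ₀ n)) = φ₀ (π (execAux M π φ₀ n)) :=
        Option.some_injective _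
          (h _ _ (by rw [execAux_succ_of_lt hf, updateSub_self]))
      rw [execAux_succ_of_lt hf, execAux_succ_of_lt (heq ▸ hf), heq, hstate]
    · rw [execAux_succ_of_not_lt hf, execAux_succ_of_not_lt (heq ▸ hf), heq]

theorem visits_iff_subext_toSub (hπ : IsPolicy M π) (h₀ : visits M π φ₀ ψ) :
    visits M π φ ψ ↔ subext ψ (toSub φ) := by
  refine ⟨visits.subext_toSub, fun h => ?_⟩
  obtain ⟨n, rfl⟩ := h₀
  exact ⟨n, hπ.execAux_eq_of_subext_toSub h⟩

theorem ssubext_cover_iff_visits (hπ : IsPolicy M π) (h₀ : visits M π φ₀ ψ) (hf : M.f ψ < M.Q) :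
    ssubext ψ (cover M π φ) ↔ visits M π φ ψ := by
  refine ⟨fun h => (hπ.visits_iff_subext_toSub h₀).2 (h.1.trans (execAux_subext_toSub M π φ _)),
    fun hv => ⟨(subext_updateSub (hπ ψ hf) _).trans (hπ.updateSub_subext_cover hv hf), ?_⟩⟩
  intro heq
  have hsome := hπ.cover_select hv hf
  rw [← heq, hπ ψ hf] at hsome
  simp at hsome

theorem visits_update_select_iff (hπ : IsPolicy M π) (h₀ : visits M π φ₀ ψ) (hf : M.f ψ < M.Q)
    (o : O) : visits M π (Function.update φ (π ψ) o) ψ ↔ visits M π φ ψ := by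
  rw [hπ.visits_iff_subext_toSub h₀, hπ.visits_iff_subext_toSub h₀,
    subext_toSub_update_iff (hπ ψ hf)]

theorem cover_update (hπ : IsPolicy M π) (he : cover M π φ e = none) (o : O) :
    cover M π (Function.update φ e o) = cover M π φ :=
  hπ.execAux_eq_of_subext_toSub
    ((subext_toSub_update_iff he o).2 (execAux_subext_toSub M π φ _))

theorem mem_ssel_update_iff (hπ : IsPolicy M π) (o : O) :
    e ∈ Ssel M π (Function.update φ e o) ↔ e ∈ Ssel M π φ := by
  rw [mem_ssel_iff, mem_ssel_iff, not_iff_not]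
  refine ⟨fun h => ?_, fun h => by rwa [hπ.cover_update h]⟩
  have hback := hπ.cover_update h (φ e)
  rw [Function.update_idem, Function.update_eq_self] at hback
  rwa [hback]

theorem mu_select_eq_of_visits (hπ : IsPolicy M π) {πs : Sub E O → E}
    (hv : visits M π φ ψ) (hf : M.f ψ < M.Q) (he : π ψ ∈ Ssel M πs φ) :
    mu M π πs (π ψ) φ = price M ψ (π ψ) * Fm M ψ (π ψ) φ := by
  rw [mu, if_pos he, if_pos (hπ.select_mem_ssel hv hf), Finset.sum_eq_single ψ]
  · rw [if_pos ⟨hv, hf, rfl⟩]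
  · rintro ψ' - hne
    exact if_neg fun ⟨hv', hf', hsel⟩ => hne (hπ.eq_of_visits_of_select_eq hv' hf' hv hf hsel)
  · simp

end IsPolicy

end Execution

section Expectation

variable {X Y : (E → O) → ℝ} {A : (E → O) → Prop}

theorem ex_one (M : Problem E O) : Ex M (fun _ => 1) = 1 := by
  simp only [Ex, mul_one, M.p_sum]

theorem ex_const_mul (M : Problem E O) (a : ℝ) (X : (E → O) → ℝ) :
    Ex M (fun φ => a * X φ) = a * Ex M X := by
  simp only [Ex, Finset.mul_sum, mul_left_comm]

theorem ex_mul_ex (M : Problem E O) (X Y : (E → O) → ℝ) :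
    Ex M X * Ex M Y =
      ∑ q : (E → O) × (E → O), M.p q.1 * M.p q.2 * (X q.1 * Y q.2) := by
  simp only [Ex, Fintype.sum_prod_type, Fintype.sum_mul_sum, mul_mul_mul_comm]

theorem ex_pos (hX : ∀ φ, 0 ≤ X φ) (hp : 0 < M.p φ) (hφ : 0 < X φ) : 0 < Ex M X :=
  Finset.sum_pos' (fun φ' _ => mul_nonneg (M.p_nonneg φ') (hX φ'))
    ⟨φ, Finset.mem_univ φ, mul_pos hp hφ⟩

theorem pr_eq_ex (M : Problem E O) (A : (E → O) → Prop) :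
    Pr M A = Ex M (fun φ => if A φ then 1 else 0) := by
  simp only [Pr, Ex, mul_ite, mul_one, mul_zero]

theorem cEx_eq_ex_div (M : Problem E O) (X : (E → O) → ℝ) (A : (E → O) → Prop) :
    cEx M X A = Ex M (fun φ => (if A φ then 1 else 0) * X φ) / Pr M A := by
  simp only [cEx, Ex, ite_mul, one_mul, zero_mul, mul_ite, mul_zero]

theorem cEx_congr (h : ∀ φ, A φ → X φ = Y φ) : cEx M X A = cEx M Y A := by
  unfold cEx
  congr 1
  refine Finset.sum_congr rfl fun φ _ => ?_
  split_ifs with hA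
  · rw [h φ hA]
  · rfl

theorem exists_of_pr_pos (h : 0 < Pr M A) : ∃ φ, A φ ∧ 0 < M.p φ := by
  obtain ⟨φ, -, hφ⟩ := Finset.exists_ne_zero_of_sum_ne_zero h.ne'
  obtain ⟨hA, hp⟩ := ite_ne_right_iff.1 hφ
  exact ⟨φ, hA, (M.p_nonneg φ).lt_of_ne' hp⟩

end Expectation

section Independence

/-- Exchanges the states of the item `e` in a pair of realizations. For two independent copies of
`Φ` this preserves the joint law, which is how independence of `Φ(e)` from the other coordinates is
used. -/
def swapAt {E O : Type*} [DecidableEq E] (e : E) (q : (E → O) × (E → O)) :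
    (E → O) × (E → O) :=
  (Function.update q.1 e (q.2 e), Function.update q.2 e (q.1 e))

omit [Fintype E] [Fintype O] [DecidableEq O] in
theorem swapAt_involutive (e : E) : Function.Involutive (swapAt (O := O) e) := by
  intro q
  simp [swapAt]

theorem p_mul_p_swapAt (M : Problem E O) (e : E) (q : (E → O) × (E → O)) :
    M.p (swapAt e q).1 * M.p (swapAt e q).2 = M.p q.1 * M.p q.2 := by
  simp only [M.indep (swapAt e q).1, M.indep (swapAt e q).2, M.indep q.1, M.indep q.2,
    ← Finset.prod_mul_distrib]
  refine Finset.prod_congr rfl fun x _ => ?_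
  by_cases hx : x = e
  · subst hx
    simp only [swapAt, Function.update_self]
    exact mul_comm _ _
  · simp only [swapAt, Function.update_of_ne hx]

theorem ex_mul_of_update_invariant {X : (E → O) → ℝ}
    (hX : ∀ φ o, X (Function.update φ e o) = X φ) (g : O → ℝ) :
    Ex M (fun φ => X φ * g (φ e)) = Ex M X * Ex M (fun φ => g (φ e)) := by
  calc Ex M (fun φ => X φ * g (φ e))
      = Ex M (fun φ => X φ * g (φ e)) * Ex M (fun _ => 1) := by rw [ex_one, mul_one]
    _ = ∑ q : (E → O) × (E → O), M.p q.1 * M.p q.2 * (X q.1 * g (q.1 e) * 1) := ex_mul_ex ..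
    _ = ∑ q : (E → O) × (E → O), M.p q.1 * M.p q.2 * (X q.1 * g (q.2 e)) := by
      refine Fintype.sum_equiv (swapAt_involutive e).toPerm _ _ fun q => ?_
      rw [Function.Involutive.coe_toPerm, p_mul_p_swapAt]
      simp only [swapAt, hX, Function.update_self, mul_one]
    _ = Ex M X * Ex M (fun φ => g (φ e)) :=
      (ex_mul_ex M X fun φ => g (φ e)).symm

theorem cEx_eq_ex_of_update_invariant {A : (E → O) → Prop}
    (hA : ∀ φ o, A (Function.update φ e o) ↔ A φ) (hpos : 0 < Pr M A) (g : O → ℝ) :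
    cEx M (fun φ => g (φ e)) A = Ex M (fun φ => g (φ e)) := by
  rw [cEx_eq_ex_div, ex_mul_of_update_invariant (by simp only [hA, implies_true]), ← pr_eq_ex,
    mul_div_cancel_left₀ _ hpos.ne']

end Independence

section MarginalGain

theorem fm_nonneg (he : ψ e = none) (φ : E → O) : 0 ≤ Fm M ψ e φ :=
  sub_nonneg.2 (M.f_mono _ _ (subext_updateSub he _))

theorem f_piecewise_sub_le_sum_fm {S : Finset E} (hS : ∀ x ∈ S, ψ x = none) (φ : E → O) :
    M.f (S.piecewise (toSub φ) ψ) - M.f ψ ≤ ∑ x ∈ S, Fm M ψ x φ := by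
  induction S using Finset.induction_on with
  | empty => simp
  | insert a S ha ih =>
    rw [Finset.forall_mem_insert] at hS
    have hext : subext ψ (S.piecewise (toSub φ) ψ) := by
      intro x o hx
      have hxS : x ∉ S := fun h => by simp [hS.2 x h] at hx
      rwa [Finset.piecewise_eq_of_notMem _ _ _ hxS]
    have hgain := M.f_submod ψ (S.piecewise (toSub φ) ψ) a (φ a) hext (by simp [ha, hS.1])
    rw [Finset.sum_insert ha, Finset.piecewise_insert, toSub, ← updateSub_eq_update]
    linarith [ih hS.2, show Fm M ψ a φ = M.f (updateSub ψ a (φ a)) - M.f ψ from rfl]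

theorem goal_sub_le_sum_fm (h : subext ψ (toSub φ)) :
    M.Q - M.f ψ ≤ ∑ x with ψ x = none, Fm M ψ x φ := by
  have hfull : Finset.piecewise {x | ψ x = none} (toSub φ) ψ = toSub φ := by
    funext x
    cases hx : ψ x with
    | none => simp [hx]
    | some o => simp [hx, h x o hx]
  have hle := f_piecewise_sub_le_sum_fm (M := M) (ψ := ψ) (S := {x | ψ x = none}) (by simp) φ
  rwa [hfull, M.f_cover] at hle

theorem exists_ex_fm_pos (hf : M.f ψ < M.Q) (h : subext ψ (toSub φ)) (hp : 0 < M.p φ) :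
    ∃ x, ψ x = none ∧ 0 < Ex M (Fm M ψ x) := by
  have hsum : 0 < ∑ x with ψ x = none, Fm M ψ x φ :=
    (sub_pos.2 hf).trans_le (goal_sub_le_sum_fm h)
  obtain ⟨x, hx, hne⟩ := Finset.exists_ne_zero_of_sum_ne_zero hsum.ne'
  rw [Finset.mem_filter_univ] at hx
  exact ⟨x, hx, ex_pos (fm_nonneg hx) hp ((fm_nonneg hx φ).lt_of_ne' hne)⟩

theorem IsGreedy.ex_fm_select_ne_zero {α : ℝ} {σ : Sub E O → E} (hσ : IsGreedy M α σ)
    (hψ : ψ ∈ Nnodes M π) : Ex M (Fm M ψ (σ ψ)) ≠ 0 := by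
  intro hzero
  obtain ⟨hf, hpr⟩ := mem_nnodes_iff.1 hψ
  obtain ⟨φ, hv, hp⟩ := exists_of_pr_pos hpr
  obtain ⟨x, hx, hpos⟩ := exists_ex_fm_pos hf hv.subext_toSub hp
  have hle := hσ.2 ψ hf x hx
  rw [hzero, mul_zero] at hle
  exact hle.not_gt (mul_pos (M.c_pos _) hpos)

end MarginalGain

theorem revenue_eq_cost_on_G_node_general {σ : Sub E O → E} (hσ : IsPolicy M σ)
    (hπ : IsPolicy M π) (hψ : ψ ∈ Nnodes M σ) (hgain : Ex M (Fm M ψ (σ ψ)) ≠ 0)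
    (hpos : 0 < Pr M fun φ =>
      (σ ψ ∈ Ssel M σ φ ∧ σ ψ ∈ Ssel M π φ) ∧ ssubext ψ (cover M σ φ)) :
    cEx M (mu M σ π (σ ψ))
        (fun φ => (σ ψ ∈ Ssel M σ φ ∧ σ ψ ∈ Ssel M π φ) ∧ ssubext ψ (cover M σ φ))
      = M.c (σ ψ) := by
  obtain ⟨hf, hpr⟩ := mem_nnodes_iff.1 hψ
  obtain ⟨φ₀, h₀, -⟩ := exists_of_pr_pos hpr
  have hevent (φ : E → O) :
      (σ ψ ∈ Ssel M σ φ ∧ σ ψ ∈ Ssel M π φ) ∧ ssubext ψ (cover M σ φ) ↔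
        visits M σ φ ψ ∧ σ ψ ∈ Ssel M π φ := by
    rw [hσ.ssubext_cover_iff_visits h₀ hf]
    exact ⟨fun h => ⟨h.2, h.1.2⟩, fun h => ⟨⟨hσ.select_mem_ssel h.1 hf, h.2⟩, h.1⟩⟩
  simp only [hevent] at hpos ⊢
  calc cEx M (mu M σ π (σ ψ)) (fun φ => visits M σ φ ψ ∧ σ ψ ∈ Ssel M π φ)
      = cEx M (fun φ => price M ψ (σ ψ) * Fm M ψ (σ ψ) φ)
          (fun φ => visits M σ φ ψ ∧ σ ψ ∈ Ssel M π φ) :=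
        cEx_congr fun φ h => hσ.mu_select_eq_of_visits h.1 hf h.2
    _ = Ex M (fun φ => price M ψ (σ ψ) * Fm M ψ (σ ψ) φ) :=
        cEx_eq_ex_of_update_invariant
          (fun φ o => and_congr (hσ.visits_update_select_iff h₀ hf o) (hπ.mem_ssel_update_iff o))
          hpos (fun o => price M ψ (σ ψ) * (M.f (updateSub ψ (σ ψ) o) - M.f ψ))
    _ = price M ψ (σ ψ) * Ex M (Fm M ψ (σ ψ)) := ex_const_mul ..
    _ = M.c (σ ψ) := div_mul_cancel₀ _ hgain

/-- For `ψ ∈ N(σ)`, `e ∉ dom ψ`, and any node `ψg` of the greedy tree at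
which `σ` selects `e` with `ψ ⊂ ψg`, conditioned on `e` being selected by both `σ` and
`π*` and on `σ` visiting `ψg` (i.e. `ψg ⊂ Ψ(σ)`), the expected revenue of `e` equals its
cost: `E[μ(e) | B(e) ∧ ψg ⊂ Ψ(σ)] = c(e)`. -/
theorem revenue_eq_cost_on_G_node
    (M : Problem E O) (α : ℝ) (hα : 1 ≤ α)
    (σ : Sub E O → E) (hσ : IsGreedy M α σ)
    (πs : Sub E O → E) (hπs : IsOptimal M πs)
    (ψ : Sub E O) (hmem : ψ ∈ Nnodes M σ)
    (e : E) (he : ψ e = none)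
    (ψg : Sub E O) (hgmem : ψg ∈ Nnodes M σ) (hgsel : σ ψg = e) (hψψg : ssubext ψ ψg)
    (hpos : 0 < Pr M fun φ =>
      (e ∈ Ssel M σ φ ∧ e ∈ Ssel M πs φ) ∧ ssubext ψg (cover M σ φ)) :
    cEx M (mu M σ πs e)
        (fun φ => (e ∈ Ssel M σ φ ∧ e ∈ Ssel M πs φ) ∧ ssubext ψg (cover M σ φ))
      = M.c e := by
  subst hgsel
  exact revenue_eq_cost_on_G_node_general hσ.1 hπs.1 hgmem (hσ.ex_fm_select_ne_zero hgmem) hpos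

end
end SSC
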